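/- Let Φ assign to every finite vector with nonnegative entries (of any length) a value Φ(p) ∈ ℝ≥0, invariantly under permuting entries and under appending zero entries, such that Φ(p ⊕ q) = Φ(p) + Φ(q) and Φ(p ⊗ q) = Φ(p)·Φ(q) for all p, q, Φ of the single-entry vector (1) is 1, and Φ of the single-entry vector (0) is 0. (i) If Φ is such that p ≽₀,₁ q implies Φ(p) ≤ Φ(q), then there exists α ∈ [0,1] with Φ = f_α; conversely, each f_α with α ∈ [0,1] has all of these properties. (ii) If Φ is such that p ≽₀,₁ q implies Φ(p) ≥ Φ(q), then there exists α ∈ (−∞,0] ∪ [1,∞) with Φ = f_α; conversely, each f_α with α ∈ (−∞,0] ∪ [1,∞) has all of these properties. -/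

import Mathlib

open scoped BigOperators NNReal

noncomputable section

/-- A probability vector on a finite index type. -/
def IsProbVec {ι : Type*} [Fintype ι] (p : ι → ℝ) : Prop :=
  (∀ i, 0 ≤ p i) ∧ ∑ i, p i = 1

/-- A (column-)stochastic matrix: nonnegative entries, every column sums to `1`. -/
def IsStochastic {ι κ : Type*} [Fintype ι] [Fintype κ] (T : ι → κ → ℝ) : Prop :=
  (∀ i j, 0 ≤ T i j) ∧ ∀ j, ∑ i, T i j = 1

/-- Matrix–vector multiplication. -/
def matVec {ι κ : Type*} [Fintype κ] (T : ι → κ → ℝ) (v : κ → ℝ) : ι → ℝ :=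
  fun i => ∑ j, T i j * v j

/-- Kronecker product of two vectors. -/
def kron {ι κ : Type*} (p : ι → ℝ) (q : κ → ℝ) : ι × κ → ℝ :=
  fun x => p x.1 * q x.2

/-- `n`-fold Kronecker power of a vector. -/
def kpow {ι : Type*} (p : ι → ℝ) (n : ℕ) : (Fin n → ι) → ℝ :=
  fun f => ∏ j, p (f j)

/-- Kronecker product reindexed along `Fin (m * n)`. -/
def kronFin {m n : ℕ} (p : Fin m → ℝ) (q : Fin n → ℝ) : Fin (m * n) → ℝ :=
  fun i => kron p q (finProdFinEquiv.symm i)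

/-- The sum of the `k` largest entries of a nonnegative vector, expressed as the
largest sum over subsets of cardinality at most `k`. -/
def topSum {ι : Type*} [Fintype ι] (p : ι → ℝ) (k : ℕ) : ℝ :=
  ⨆ s ∈ {s : Finset ι | s.card ≤ k}, ∑ i ∈ s, p i

/-- Majorization for nonnegative vectors (possibly of different lengths):
equal total sums, and for each `k` the sum of the `k` largest entries of `p` is
at least that of `q`. -/
def Majorizes {ι κ : Type*} [Fintype ι] [Fintype κ] (p : ι → ℝ) (q : κ → ℝ) : Prop :=
  (∑ i, p i = ∑ j, q j) ∧ ∀ k : ℕ, topSum q k ≤ topSum p k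

/-- The size of the support, `‖p‖₀`. -/
def supp0 {ι : Type*} [Fintype ι] (p : ι → ℝ) : ℕ :=
  (Finset.univ.filter fun i => p i ≠ 0).card

/-- Entrywise nonnegativity. -/
def NonnegVec {n : ℕ} (p : Fin n → ℝ) : Prop := ∀ i, 0 ≤ p i

/-- The modified majorization preorder `≽₀,₁`: majorization plus equality of
support sizes. -/
def MajMod {ι κ : Type*} [Fintype ι] [Fintype κ] (p : ι → ℝ) (q : κ → ℝ) : Prop :=
  Majorizes p q ∧ supp0 p = supp0 q

/-- `f_α(p) = ∑_{i ∈ supp p} (p i)^α`. -/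
def fA {ι : Type*} [Fintype ι] (α : ℝ) (p : ι → ℝ) : ℝ :=
  ∑ i, if p i = 0 then 0 else p i ^ α

/-- Shannon entropy (the terms with `p i = 0` vanish). -/
def H1ent {ι : Type*} [Fintype ι] (p : ι → ℝ) : ℝ := -∑ i, p i * Real.log (p i)

/-- `H₀'(p) = ∑_{i ∈ supp p} log p_i`. -/
def H0' {ι : Type*} [Fintype ι] (p : ι → ℝ) : ℝ :=
  ∑ i, if p i = 0 then 0 else Real.log (p i)

/-- Rényi entropy of order `α` (with `α = 1` the Shannon entropy). -/
def Hent {ι : Type*} [Fintype ι] (α : ℝ) (p : ι → ℝ) : ℝ :=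
  if α = 1 then -∑ i, p i * Real.log (p i)
  else (1 / (1 - α)) * Real.log (∑ i, if p i = 0 then 0 else p i ^ α)

/-- Min-entropy `H_∞(p) = - log max_i p_i`. -/
def HentInf {ι : Type*} [Fintype ι] (p : ι → ℝ) : ℝ := -Real.log (⨆ i, p i)

/-- Kullback–Leibler divergence (the terms with `p i = 0` vanish). -/
def KL {n : ℕ} (p q : Fin n → ℝ) : ℝ :=
  ∑ i, p i * Real.log (p i / q i)

/-- Rényi divergence of order `α` for vectors with common support. -/
def Renyi {n : ℕ} (α : ℝ) (p q : Fin n → ℝ) : ℝ :=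
  if α = 1 then ∑ i, p i * Real.log (p i / q i)
  else (1 / (α - 1)) * Real.log (∑ i, if p i = 0 then 0 else p i ^ α * q i ^ (1 - α))

/-- Max-divergence `D_∞(p‖q) = max_{i ∈ supp q} log (p_i / q_i)`. -/
def RenyiInf {n : ℕ} (p q : Fin n → ℝ) : ℝ :=
  ⨆ i ∈ Finset.univ.filter (fun i => q i ≠ 0), Real.log (p i / q i)

/-- Rényi divergence with values in the extended reals `[0, ∞]`. -/
def RenyiE {n : ℕ} (α : ℝ) (p q : Fin n → ℝ) : EReal :=
  if α = 1 then
    (if ∀ i, p i ≠ 0 → q i ≠ 0 then ((∑ i, p i * Real.log (p i / q i) : ℝ) : EReal) else ⊤)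
  else if α < 1 then
    (if ∃ i, p i ≠ 0 ∧ q i ≠ 0 then
      (((1 / (α - 1)) *
        Real.log (∑ i, if p i = 0 ∨ q i = 0 then 0 else p i ^ α * q i ^ (1 - α)) : ℝ) : EReal)
    else (⊤ : EReal))
  else
    (if ∀ i, p i ≠ 0 → q i ≠ 0 then
      (((1 / (α - 1)) *
        Real.log (∑ i, if p i = 0 then 0 else p i ^ α * q i ^ (1 - α)) : ℝ) : EReal)
    else (⊤ : EReal))

/-- The common support of a tuple of vectors. -/
def suppIdx {d n : ℕ} (P : Fin d → Fin n → ℝ) : Finset (Fin n) :=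
  Finset.univ.filter fun i => ∃ k, P k i ≠ 0

/-- `f_α(P) = ∑_{i ∈ I} ∏_k (p_i^{(k)})^{α_k}` with `I` the common support. -/
def fMat {d n : ℕ} (α : Fin d → ℝ) (P : Fin d → Fin n → ℝ) : ℝ :=
  ∑ i ∈ suppIdx P, ∏ k, P k i ^ α k

/-- The matrix `α`-divergence `D_α`. -/
def Dmat {d n : ℕ} (α : Fin d → ℝ) (P : Fin d → Fin n → ℝ) : ℝ :=
  (1 / ((⨆ k, α k) - 1)) * Real.log (∑ i ∈ suppIdx P, ∏ k, P k i ^ α k)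

/-- The tropical matrix divergence `D^𝕋_β`. -/
def DmatT {d n : ℕ} (β : Fin d → ℝ) (P : Fin d → Fin n → ℝ) : ℝ :=
  (1 / (⨆ k, β k)) * Real.log (⨆ i ∈ suppIdx P, ∏ k, P k i ^ β k)

/-- Membership in `A₊`: entries summing to `1`, all nonnegative. -/
def memAplus {d : ℕ} (α : Fin d → ℝ) : Prop := (∑ k, α k = 1) ∧ ∀ k, 0 ≤ α k

/-- Membership in `A₋`: entries summing to `1`, one entry `≥ 1`, the others `≤ 0`. -/
def memAminus {d : ℕ} (α : Fin d → ℝ) : Prop :=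
  (∑ k, α k = 1) ∧ ∃ k, 1 ≤ α k ∧ ∀ l, l ≠ k → α l ≤ 0

/-- Membership in `B₋`: entries summing to `0`, one entry `≥ 0`, the others `≤ 0`. -/
def memBminus {d : ℕ} (β : Fin d → ℝ) : Prop :=
  (∑ k, β k = 0) ∧ ∃ k, 0 ≤ β k ∧ ∀ l, l ≠ k → β l ≤ 0

/-- `α` is none of the standard basis vectors `e₁, …, e_d`. -/
def notBasis {d : ℕ} (α : Fin d → ℝ) : Prop := ∀ k, α ≠ Pi.single k 1

/-- ℓ¹-distance of two vectors, padding with zeros to a common length. -/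
def l1PadDist {m n : ℕ} (p : Fin m → ℝ) (q : Fin n → ℝ) : ℝ :=
  ∑ i : Fin (max m n),
    |(if h : (i : ℕ) < m then p ⟨(i : ℕ), h⟩ else 0) -
      (if h : (i : ℕ) < n then q ⟨(i : ℕ), h⟩ else 0)|

/-- Index type of the direct sum `⨁_{s=0}^{n-1} p^{⊗(n-1-s)} ⊗ q^{⊗s}`. -/
abbrev TrickIdx (m m' n : ℕ) : Type :=
  Σ s : Fin n, (Fin (n - 1 - (s : ℕ)) → Fin m) × (Fin (s : ℕ) → Fin m')

/-- The standard catalyst `(1/n) ⨁_{s=0}^{n-1} p^{⊗(n-1-s)} ⊗ q^{⊗s}`. -/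
def trick {m m' : ℕ} (p : Fin m → ℝ) (q : Fin m' → ℝ) (n : ℕ) : TrickIdx m m' n → ℝ :=
  fun x => (1 / (n : ℝ)) * (kpow p (n - 1 - (x.1 : ℕ)) x.2.1 * kpow q (x.1 : ℕ) x.2.2)

/-- A valid tuple: nonnegative entries and common support across the tuple. -/
def TupOK {d n : ℕ} (P : Fin d → Fin n → ℝ) : Prop :=
  (∀ k i, 0 ≤ P k i) ∧ ∀ k l i, P k i ≠ 0 ↔ P l i ≠ 0

/-- Matrix majorization of tuples: a single stochastic matrix carrying each column
of `P` to the corresponding column of `Q`. -/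
def TupMaj {d m n : ℕ} (P : Fin d → Fin m → ℝ) (Q : Fin d → Fin n → ℝ) : Prop :=
  ∃ T : Fin n → Fin m → ℝ, IsStochastic T ∧ ∀ k, matVec T (P k) = Q k

/-- The basic properties of a normalized additive and multiplicative
functional on finite nonnegative vectors of arbitrary length: nonnegative
values, permutation invariance, invariance under appending a zero entry,
additivity under direct sums, multiplicativity under Kronecker products, and
normalization on the single-entry vectors `(1)` and `(0)`. -/
def PhiBase (Φ : ∀ n : ℕ, (Fin n → ℝ) → ℝ) : Prop :=
  (∀ (n : ℕ) (p : Fin n → ℝ), NonnegVec p → 0 ≤ Φ n p) ∧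
  (∀ (n : ℕ) (σ : Equiv.Perm (Fin n)) (p : Fin n → ℝ), NonnegVec p →
    Φ n (p ∘ σ) = Φ n p) ∧
  (∀ (n : ℕ) (p : Fin n → ℝ), NonnegVec p → Φ (n + 1) (Fin.snoc p 0) = Φ n p) ∧
  (∀ (m n : ℕ) (p : Fin m → ℝ) (q : Fin n → ℝ), NonnegVec p → NonnegVec q →
    Φ (m + n) (Fin.append p q) = Φ m p + Φ n q) ∧
  (∀ (m n : ℕ) (p : Fin m → ℝ) (q : Fin n → ℝ), NonnegVec p → NonnegVec q →
    Φ (m * n) (kronFin p q) = Φ m p * Φ n q) ∧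
  Φ 1 (fun _ => 1) = 1 ∧ Φ 1 (fun _ => 0) = 0

/-!
A convex function agrees at any finite set of points with an affine function plus a nonnegative
combination of hinges `x ↦ max (t - x) 0`. Majorization controls the sums of hinges, and equality
of total sums and of support sizes cancels the affine part, so sums of convex functions over the
supports are monotone. Since `x ↦ x ^ α` is convex for `α ≤ 0` or `1 ≤ α` and concave for
`0 ≤ α ≤ 1`, this yields the monotonicity of `f_α`.

Conversely, `Φ` is determined by the multiplicative function `φ x = Φ (x)`. Comparing `(t, 2 - t)`
with `(1, 1)` or with `(1/2, 3/2)` bounds `φ` near `1`, so `log ∘ φ ∘ exp` is an additive function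
bounded above near `0`, hence linear, and `φ x = x ^ α`. Comparing `(1/2, 3/2)` with `(1, 1)` once
more restricts `α`, by strict convexity or concavity of `x ↦ x ^ α`.
-/

section Karamata

open Set

/-- Convex piecewise-linear functions on `ℝ` with finitely many kinks, all of them in `U`, written
as an affine function plus nonnegative multiples of the hinges `x ↦ max (t - x) 0`. They reduce
inequalities between sums of values of a convex function to the case of a single hinge. -/
inductive IsHingeSum (U : Set ℝ) : (ℝ → ℝ) → Prop
  | affine (a b : ℝ) : IsHingeSum U fun x => a + b * x
  | add_hinge {g : ℝ → ℝ} {c t : ℝ} (hg : IsHingeSum U g) (hc : 0 ≤ c) (ht : t ∈ U) :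
      IsHingeSum U fun x => g x + c * max (t - x) 0

lemma exists_add_mul_sub_le_of_convexOn {U : Set ℝ} {f : ℝ → ℝ} (hU : IsOpen U)
    (hf : ConvexOn ℝ U f) {m : ℝ} (hm : m ∈ U) : ∃ b, ∀ y ∈ U, y < m → f m + b * (y - m) ≤ f y := by
  refine ⟨derivWithin f (Iio m) m, fun y hy hym => ?_⟩
  have hslope := hf.slope_le_leftDeriv_of_mem_interior hy (hU.interior_eq.symm ▸ hm) hym
  rw [slope_def_field, div_le_iff₀ (sub_pos.2 hym)] at hslope
  linarith

/- Interpolating from right to left keeps `g` affine to the left of the smallest node `m`, so the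
next node is matched by one hinge with kink `m`. -/
lemma exists_isHingeSum_eqOn_insert {U : Set ℝ} {f : ℝ → ℝ} (hU : IsOpen U)
    (hf : ConvexOn ℝ U f) (S : Finset ℝ) :
    ∀ m ∈ U, ↑S ⊆ U → (∀ x ∈ S, m < x) →
      ∃ (g : ℝ → ℝ) (b : ℝ), IsHingeSum U g ∧ (∀ x ∈ insert m S, g x = f x) ∧
        (∀ x ≤ m, g x = f m + b * (x - m)) ∧ ∀ y ∈ U, y < m → g y ≤ f y := by
  induction S using Finset.induction_on_min with
  | empty =>
    intro m hm _ _
    obtain ⟨b, hb⟩ := exists_add_mul_sub_le_of_convexOn hU hf hm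
    refine ⟨fun x => (f m - b * m) + b * x, b, .affine _ _, by simp, fun x _ => by ring, ?_⟩
    intro y hy hym
    linarith [hb y hy hym]
  | insert m' S hlt ih =>
    intro m hm hSU hmS
    rw [Finset.coe_insert, insert_subset_iff] at hSU
    have hmm' : m < m' := hmS m' (Finset.mem_insert_self _ _)
    obtain ⟨g, b, hg, hgS, hgleft, hgle⟩ := ih m' hSU.1 hSU.2 hlt
    set b' := (f m' - f m) / (m' - m) with hb'
    have hb'_mul : b' * (m' - m) = f m' - f m := div_mul_cancel₀ _ (sub_pos.2 hmm').ne'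
    have hb'_le : b' ≤ b := by
      have := hgle m hm hmm'
      rw [hgleft m hmm'.le] at this
      rw [hb', div_le_iff₀ (sub_pos.2 hmm')]
      linarith
    have hleft : ∀ x ≤ m', g x + (b - b') * max (m' - x) 0 = f m + b' * (x - m) := by
      intro x hx
      rw [hgleft x hx, max_eq_left (sub_nonneg.2 hx)]
      linear_combination -hb'_mul
    refine ⟨_, b', hg.add_hinge (sub_nonneg.2 hb'_le) hSU.1, ?_, ?_, ?_⟩
    · intro x hx
      rcases Finset.mem_insert.1 hx with rfl | hx
      · rw [hleft x hmm'.le]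
        ring
      · have hm'x : m' ≤ x :=
          (Finset.mem_insert.1 hx).elim (fun h => h.ge) fun h => (hlt x h).le
        rw [max_eq_right (sub_nonpos.2 hm'x), hgS x hx]
        ring
    · exact fun x hx => hleft x (hx.trans hmm'.le)
    · intro y hy hym
      have hslope := hf.slope_mono_adjacent hy hSU.1 hym hmm'
      rw [div_le_iff₀ (sub_pos.2 hym)] at hslope
      rw [hleft y (hym.trans hmm').le]
      linarith

lemma exists_isHingeSum_eqOn {U : Set ℝ} {f : ℝ → ℝ} (hU : IsOpen U) (hf : ConvexOn ℝ U f)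
    {S : Finset ℝ} (hS : ↑S ⊆ U) : ∃ g, IsHingeSum U g ∧ ∀ x ∈ S, g x = f x := by
  rcases S.eq_empty_or_nonempty with rfl | hne
  · exact ⟨_, .affine 0 0, by simp⟩
  have hmin := S.min'_mem hne
  obtain ⟨g, -, hg, hgS, -⟩ := exists_isHingeSum_eqOn_insert hU hf (S.erase (S.min' hne)) _
    (hS hmin) (fun x hx => hS (Finset.mem_of_mem_erase hx))
    fun x hx => S.min'_lt_of_mem_erase_min' hne hx
  rw [Finset.insert_erase hmin] at hgS
  exact ⟨g, hg, hgS⟩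

variable {ι κ : Type*} {s : Finset ι} {t : Finset κ} {p : ι → ℝ} {q : κ → ℝ} {U : Set ℝ}

lemma IsHingeSum.sum_le_sum {g : ℝ → ℝ} (hg : IsHingeSum U g) (hcard : t.card = s.card)
    (hsum : ∑ j ∈ t, q j = ∑ i ∈ s, p i)
    (hhinge : ∀ x ∈ U, ∑ j ∈ t, max (q j - x) 0 ≤ ∑ i ∈ s, max (p i - x) 0) :
    ∑ j ∈ t, g (q j) ≤ ∑ i ∈ s, g (p i) := by
  induction hg with
  | affine a b => simp [Finset.sum_add_distrib, ← Finset.mul_sum, hcard, hsum]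
  | @add_hinge g c x _ hc hx ih =>
    have hflip : ∀ y : ℝ, max (x - y) 0 = max (y - x) 0 - (y - x) := fun y => by
      rcases le_total x y with h | h
      · rw [max_eq_right (sub_nonpos.2 h), max_eq_left (sub_nonneg.2 h)]; ring
      · rw [max_eq_left (sub_nonneg.2 h), max_eq_right (sub_nonpos.2 h)]; ring
    have hle : ∑ j ∈ t, max (x - q j) 0 ≤ ∑ i ∈ s, max (x - p i) 0 := by
      simp only [hflip, Finset.sum_sub_distrib, hsum, Finset.sum_const, hcard]
      linarith [hhinge x hx]
    simp only [Finset.sum_add_distrib, ← Finset.mul_sum]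
    gcongr

theorem sum_le_sum_of_convexOn_of_hinge {f : ℝ → ℝ} (hU : IsOpen U) (hf : ConvexOn ℝ U f)
    (hp : ∀ i ∈ s, p i ∈ U) (hq : ∀ j ∈ t, q j ∈ U) (hcard : t.card = s.card)
    (hsum : ∑ j ∈ t, q j = ∑ i ∈ s, p i)
    (hhinge : ∀ x ∈ U, ∑ j ∈ t, max (q j - x) 0 ≤ ∑ i ∈ s, max (p i - x) 0) :
    ∑ j ∈ t, f (q j) ≤ ∑ i ∈ s, f (p i) := by
  classical
  obtain ⟨g, hg, hgf⟩ := exists_isHingeSum_eqOn hU hf (S := s.image p ∪ t.image q) (by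
    simp only [Finset.coe_union, Finset.coe_image, union_subset_iff, image_subset_iff]
    exact ⟨hp, hq⟩)
  have hgp : ∀ i ∈ s, g (p i) = f (p i) := fun i hi =>
    hgf _ (Finset.mem_union_left _ (Finset.mem_image_of_mem p hi))
  have hgq : ∀ j ∈ t, g (q j) = f (q j) := fun j hj =>
    hgf _ (Finset.mem_union_right _ (Finset.mem_image_of_mem q hj))
  rw [← Finset.sum_congr rfl hgp, ← Finset.sum_congr rfl hgq]
  exact hg.sum_le_sum hcard hsum hhinge

end Karamata

section Majorization

open Finset

variable {ι κ : Type*} [Fintype ι] [Fintype κ] {p : ι → ℝ} {q : κ → ℝ}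

lemma topSum_le {k : ℕ} {M : ℝ} (hM : 0 ≤ M)
    (h : ∀ s : Finset ι, s.card ≤ k → ∑ i ∈ s, p i ≤ M) : topSum p k ≤ M :=
  Real.iSup_le (fun s => Real.iSup_le (h s) hM) hM

lemma sum_le_topSum (p : ι → ℝ) {s : Finset ι} {k : ℕ} (hs : s.card ≤ k) :
    ∑ i ∈ s, p i ≤ topSum p k := by
  have hbdd : BddAbove (Set.range fun s : Finset ι =>
      ⨆ (_ : s ∈ {s : Finset ι | s.card ≤ k}), ∑ i ∈ s, p i) :=
    (Set.finite_range _).bddAbove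
  refine le_trans ?_ (le_ciSup hbdd s)
  rw [ciSup_pos (show s ∈ {s : Finset ι | s.card ≤ k} from hs)]

lemma topSum_le_mul_add_sum_hinge (p : ι → ℝ) (k : ℕ) {x : ℝ} (hx : 0 ≤ x) :
    topSum p k ≤ k * x + ∑ i, max (p i - x) 0 := by
  refine topSum_le (by positivity) fun s hs => ?_
  calc ∑ i ∈ s, p i ≤ ∑ i ∈ s, (x + max (p i - x) 0) :=
        sum_le_sum fun i _ => by linarith [le_max_left (p i - x) 0]
    _ = s.card * x + ∑ i ∈ s, max (p i - x) 0 := by simp [sum_add_distrib]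
    _ ≤ k * x + ∑ i, max (p i - x) 0 := by
        gcongr
        exact subset_univ s

lemma mul_add_sum_hinge_le_topSum (q : κ → ℝ) (x : ℝ) :
    (#{j | x < q j} : ℝ) * x + ∑ j, max (q j - x) 0 ≤ topSum q #{j | x < q j} := by
  have hhinge : ∑ j, max (q j - x) 0 = ∑ j with x < q j, (q j - x) := by
    rw [sum_filter]
    refine sum_congr rfl fun j _ => ?_
    split_ifs with h
    · exact max_eq_left (sub_pos.2 h).le
    · exact max_eq_right (sub_nonpos.2 (not_lt.1 h))
  refine le_trans (le_of_eq ?_) (sum_le_topSum q le_rfl)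
  simp [hhinge, sum_sub_distrib]

lemma Majorizes.sum_hinge_le (h : Majorizes p q) {x : ℝ} (hx : 0 ≤ x) :
    ∑ j, max (q j - x) 0 ≤ ∑ i, max (p i - x) 0 := by
  have hq := mul_add_sum_hinge_le_topSum q x
  have hp := topSum_le_mul_add_sum_hinge p #{j | x < q j} hx
  linarith [h.2 #{j | x < q j}]

theorem MajMod.sum_le_sum_of_convexOn {f : ℝ → ℝ} (h : MajMod p q) (hp : ∀ i, 0 ≤ p i)
    (hq : ∀ j, 0 ≤ q j) (hf : ConvexOn ℝ (Set.Ioi 0) f) :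
    ∑ j with q j ≠ 0, f (q j) ≤ ∑ i with p i ≠ 0, f (p i) := by
  refine sum_le_sum_of_convexOn_of_hinge isOpen_Ioi hf
    (fun i hi => (hp i).lt_of_ne' (mem_filter.1 hi).2)
    (fun j hj => (hq j).lt_of_ne' (mem_filter.1 hj).2) h.2.symm ?_ fun x hx => ?_
  · simpa only [sum_filter_ne_zero] using h.1.1.symm
  · have hx0 : max (0 - x) 0 = 0 := max_eq_right (by linarith [Set.mem_Ioi.1 hx])
    have hsupp : ∀ y : ℝ, max (y - x) 0 ≠ 0 → y ≠ 0 := fun y hy hy0 => hy (hy0 ▸ hx0)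
    rw [sum_filter_of_ne fun i _ => hsupp (p i), sum_filter_of_ne fun j _ => hsupp (q j)]
    exact h.1.sum_hinge_le hx.le

lemma majorizes_convexComb_perm (p : ι → ℝ) (σ : Equiv.Perm ι) {a b : ℝ} (ha : 0 ≤ a)
    (hb : 0 ≤ b) (hab : a + b = 1) : Majorizes p fun i => a * p i + b * p (σ i) := by
  refine ⟨?_, fun k => topSum_le ?_ fun s hs => ?_⟩
  · rw [sum_add_distrib, ← mul_sum, ← mul_sum, Equiv.sum_comp σ p, ← add_mul, hab, one_mul]
  · exact sum_le_topSum p (s := ∅) (by simp)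
  calc ∑ i ∈ s, (a * p i + b * p (σ i))
      = a * ∑ i ∈ s, p i + b * ∑ i ∈ s.map σ.toEmbedding, p i := by
        simp [sum_add_distrib, mul_sum]
    _ ≤ a * topSum p k + b * topSum p k := by
        gcongr
        · exact sum_le_topSum p hs
        · exact sum_le_topSum p (by rwa [card_map])
    _ = topSum p k := by rw [← add_mul, hab, one_mul]

lemma supp0_eq_card (hp : ∀ i, p i ≠ 0) : supp0 p = Fintype.card ι := by
  simp [supp0, hp]

lemma majMod_pair {x y a b : ℝ} (hx : 0 < x) (hy : 0 < y) (ha : 0 ≤ a) (hb : 0 ≤ b)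
    (hab : a + b = 1) : MajMod ![x, y] ![a * x + b * y, a * y + b * x] := by
  have hpos : ∀ {u v : ℝ}, 0 < u → 0 < v → 0 < a * u + b * v := fun hu hv =>
    convex_Ioi (0 : ℝ) hu hv ha hb hab
  refine ⟨?_, ?_⟩
  · convert majorizes_convexComb_perm ![x, y] (Equiv.swap 0 1) ha hb hab using 1
    funext i
    fin_cases i <;> simp
  · rw [supp0_eq_card (by simp [Fin.forall_fin_two, hx.ne', hy.ne']),
      supp0_eq_card (by simp [Fin.forall_fin_two, (hpos hx hy).ne', (hpos hy hx).ne'])]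

lemma majMod_pair_one {t : ℝ} (ht₀ : 0 < t) (ht₂ : t < 2) : MajMod ![t, 2 - t] ![1, 1] := by
  convert majMod_pair ht₀ (sub_pos.2 ht₂) one_half_pos.le one_half_pos.le (add_halves 1) using 2
    <;> ring_nf

lemma majMod_half_pair {t : ℝ} (ht₀ : 1 / 2 ≤ t) (ht₁ : t ≤ 3 / 2) :
    MajMod ![1 / 2, 3 / 2] ![t, 2 - t] := by
  convert majMod_pair (x := 1 / 2) (y := 3 / 2) (by norm_num) (by norm_num) (sub_nonneg.2 ht₁)
    (sub_nonneg.2 ht₀) (by ring) using 2 <;> ring_nf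

end Majorization

section PowerFunctions

open Set

lemma strictConvexOn_rpow_of_neg {α : ℝ} (hα : α < 0) :
    StrictConvexOn ℝ (Ioi 0) fun x : ℝ => x ^ α := by
  have himage : Real.log '' Ioi 0 = univ := Real.surjOn_log.image_eq_of_mapsTo (mapsTo_univ _ _)
  have hanti : StrictAnti fun t : ℝ => Real.exp α ^ t :=
    Real.strictAnti_rpow_of_base_lt_one (Real.exp_pos α) (by simpa using hα)
  have hcomp : StrictConvexOn ℝ (Ioi 0) ((Real.exp α ^ ·) ∘ Real.log) :=
    (himage ▸ convexOn_rpow_left (Real.exp_pos α)).comp_strictConcaveOn strictConcaveOn_log_Ioi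
      (hanti.strictAntiOn _)
  refine hcomp.congr fun x hx => ?_
  simp [Real.rpow_def_of_pos hx, ← Real.exp_mul, mul_comm]

lemma strictConvexOn_Ioi_rpow {α : ℝ} (hα : α < 0 ∨ 1 < α) :
    StrictConvexOn ℝ (Ioi 0) fun x : ℝ => x ^ α :=
  hα.elim strictConvexOn_rpow_of_neg fun h =>
    (strictConvexOn_rpow h).subset Ioi_subset_Ici_self (convex_Ioi 0)

lemma convexOn_Ioi_rpow {α : ℝ} (hα : α ≤ 0 ∨ 1 ≤ α) :
    ConvexOn ℝ (Ioi 0) fun x : ℝ => x ^ α := by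
  rcases hα with hα | hα
  · rcases hα.eq_or_lt with rfl | hα
    · simpa only [Real.rpow_zero] using convexOn_const (1 : ℝ) (convex_Ioi (0 : ℝ))
    · exact (strictConvexOn_rpow_of_neg hα).convexOn
  · exact (convexOn_rpow hα).subset Ioi_subset_Ici_self (convex_Ioi 0)

end PowerFunctions

section PowerSums

open Finset

variable {ι κ : Type*} [Fintype ι] [Fintype κ] {p : ι → ℝ} {q : κ → ℝ} {α : ℝ}

lemma fA_eq_sum_filter (α : ℝ) (p : ι → ℝ) : fA α p = ∑ i with p i ≠ 0, p i ^ α := by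
  simp [fA, sum_filter, ite_not]

theorem MajMod.fA_le_fA_of_convex (h : MajMod p q) (hp : ∀ i, 0 ≤ p i) (hq : ∀ j, 0 ≤ q j)
    (hα : α ≤ 0 ∨ 1 ≤ α) : fA α q ≤ fA α p := by
  simpa only [fA_eq_sum_filter] using h.sum_le_sum_of_convexOn hp hq (convexOn_Ioi_rpow hα)

theorem MajMod.fA_le_fA_of_concave (h : MajMod p q) (hp : ∀ i, 0 ≤ p i) (hq : ∀ j, 0 ≤ q j)
    (hα₀ : 0 ≤ α) (hα₁ : α ≤ 1) : fA α p ≤ fA α q := by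
  have hconv := ((Real.concaveOn_rpow hα₀ hα₁).subset Set.Ioi_subset_Ici_self (convex_Ioi 0)).neg
  simpa [fA_eq_sum_filter] using h.sum_le_sum_of_convexOn hp hq hconv

lemma fA_kron (α : ℝ) (hp : ∀ i, 0 ≤ p i) (hq : ∀ j, 0 ≤ q j) :
    fA α (kron p q) = fA α p * fA α q := by
  simp only [fA, Fintype.sum_prod_type, sum_mul_sum]
  refine sum_congr rfl fun i _ => sum_congr rfl fun j _ => ?_
  by_cases hi : p i = 0
  · simp [kron, hi]
  by_cases hj : q j = 0
  · simp [kron, hj]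
  simp [kron, hi, hj, Real.mul_rpow (hp i) (hq j)]

lemma fA_comp_equiv (α : ℝ) (p : ι → ℝ) (e : κ ≃ ι) : fA α (p ∘ e) = fA α p :=
  Equiv.sum_comp e fun i => if p i = 0 then 0 else p i ^ α

theorem phiBase_fA (α : ℝ) : PhiBase fun _ p => fA α p := by
  refine ⟨fun n p hp => ?_, fun n σ p _ => fA_comp_equiv α p σ, fun n p _ => ?_,
    fun m n p q _ _ => ?_, fun m n p q hp hq => ?_, ?_, ?_⟩
  · beta_reduce
    rw [fA_eq_sum_filter]
    exact sum_nonneg fun i _ => Real.rpow_nonneg (hp i) α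
  · simp [fA, Fin.sum_univ_castSucc]
  · simp [fA, Fin.sum_univ_add]
  · exact (fA_comp_equiv α (kron p q) finProdFinEquiv.symm).trans (fA_kron α hp hq)
  · simp [fA]
  · simp [fA]

lemma fA_pair_one (α : ℝ) : fA α ![1, 1] = 2 := by
  norm_num [fA]

lemma two_lt_fA_pair (hα : α < 0 ∨ 1 < α) : 2 < fA α ![1 / 2, 3 / 2] := by
  have h := (strictConvexOn_Ioi_rpow hα).2 (show (1 / 2 : ℝ) ∈ Set.Ioi 0 by norm_num)
    (show (3 / 2 : ℝ) ∈ Set.Ioi 0 by norm_num) (by norm_num) one_half_pos one_half_pos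
    (add_halves 1)
  norm_num [fA] at h ⊢
  linarith

lemma fA_pair_lt_two (hα₀ : 0 < α) (hα₁ : α < 1) : fA α ![1 / 2, 3 / 2] < 2 := by
  have h := (Real.strictConcaveOn_rpow hα₀ hα₁).2 (show (1 / 2 : ℝ) ∈ Set.Ici 0 by norm_num)
    (show (3 / 2 : ℝ) ∈ Set.Ici 0 by norm_num) (by norm_num) one_half_pos one_half_pos
    (add_halves 1)
  norm_num [fA] at h ⊢
  linarith

end PowerSums

section Cauchy

open Filter Topology

theorem continuous_of_isBoundedUnder_nhds {G : Type*} [SeminormedAddCommGroup G] (f : G →+ ℝ)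
    {x : G} (hf : IsBoundedUnder (· ≤ ·) (𝓝 x) f) : Continuous f := by
  obtain ⟨M, hM⟩ := hf.eventually_le
  have hle : ∀ᶠ v in 𝓝 (0 : G), f v ≤ M - f x := by
    have hadd : Tendsto (x + ·) (𝓝 0) (𝓝 x) := by
      simpa using (continuous_const_add x).tendsto 0
    filter_upwards [hadd.eventually hM] with v hv
    rw [map_add] at hv
    exact le_sub_iff_add_le'.2 hv
  have habs : ∀ᶠ v in 𝓝 (0 : G), ‖f v‖ ≤ M - f x := by
    have hneg : Tendsto (-· : G → G) (𝓝 0) (𝓝 0) := by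
      simpa using (continuous_neg (G := G)).tendsto 0
    filter_upwards [hle, hneg.eventually hle] with v hv hv'
    rw [map_neg] at hv'
    exact abs_le'.2 ⟨hv, hv'⟩
  exact f.continuous_of_isBounded_nhds_zero habs
    (isBounded_iff_forall_norm_le.2 ⟨M - f x, Set.forall_mem_image.2 fun _ hv => hv⟩)

theorem exists_eq_rpow_of_map_mul {φ : ℝ → ℝ} (h1 : φ 1 = 1)
    (hmul : ∀ x > 0, ∀ y > 0, φ (x * y) = φ x * φ y) {x₀ : ℝ} (hx₀ : 0 < x₀)
    (hbdd : IsBoundedUnder (· ≤ ·) (𝓝 x₀) φ) : ∃ α : ℝ, ∀ x > 0, φ x = x ^ α := by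
  have hpos : ∀ x > 0, 0 < φ x := fun x hx => by
    have hne : φ x ≠ 0 := fun h0 => by
      have := hmul x hx x⁻¹ (inv_pos.2 hx)
      simp [mul_inv_cancel₀ hx.ne', h1, h0] at this
    have hsq := hmul _ (Real.sqrt_pos.2 hx) _ (Real.sqrt_pos.2 hx)
    rw [Real.mul_self_sqrt hx.le] at hsq
    exact (hsq ▸ mul_self_nonneg _ : 0 ≤ φ x).lt_of_ne' hne
  let A : ℝ →+ ℝ := AddMonoidHom.mk' (fun t => Real.log (φ (Real.exp t))) fun s t => by
    rw [Real.exp_add, hmul _ (Real.exp_pos s) _ (Real.exp_pos t),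
      Real.log_mul (hpos _ (Real.exp_pos s)).ne' (hpos _ (Real.exp_pos t)).ne']
  have hA : Continuous A := by
    obtain ⟨M, hM⟩ := hbdd.eventually_le
    have hexp : Tendsto Real.exp (𝓝 (Real.log x₀)) (𝓝 x₀) := by
      simpa only [Real.exp_log hx₀] using Real.continuous_exp.tendsto (Real.log x₀)
    refine continuous_of_isBoundedUnder_nhds A (x := Real.log x₀)
      (isBoundedUnder_of_eventually_le (a := Real.log M) ?_)
    filter_upwards [hexp.eventually hM] with t ht
    exact Real.log_le_log (hpos _ (Real.exp_pos t)) ht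
  refine ⟨A 1, fun x hx => ?_⟩
  have hlin : Real.log (φ x) = Real.log x * A 1 := by
    simpa [A, Real.exp_log hx] using map_real_smul A hA (Real.log x) 1
  rw [Real.rpow_def_of_pos hx, ← hlin, Real.exp_log (hpos x hx)]

end Cauchy

namespace PhiBase

open Filter Topology

variable {Φ : ∀ n : ℕ, (Fin n → ℝ) → ℝ} (hΦ : PhiBase Φ)

include hΦ

lemma map_eq_sum {n : ℕ} {p : Fin n → ℝ} (hp : NonnegVec p) :
    Φ n p = ∑ i, Φ 1 fun _ => p i := by
  obtain ⟨-, -, hsnoc, happend, -, -, hzero⟩ := hΦ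
  induction n with
  | zero =>
    have h := hsnoc 0 p hp
    rw [show (Fin.snoc p 0 : Fin (0 + 1) → ℝ) = fun _ => 0 from
      funext fun i => by rw [Fin.fin_one_eq_zero i]; rfl] at h
    simpa using h.symm.trans hzero
  | succ n ih =>
    have hinit : NonnegVec (Fin.init p) := fun i => hp _
    have hlast : NonnegVec fun _ : Fin 1 => p (Fin.last n) := fun _ => hp _
    calc Φ (n + 1) p = Φ (n + 1) (Fin.append (Fin.init p) fun _ : Fin 1 => p (Fin.last n)) := by
          rw [Fin.append_right_eq_snoc, Fin.snoc_init_self]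
      _ = ∑ i, Φ 1 fun _ => p i := by
          rw [happend _ _ _ _ hinit hlast, ih hinit, Fin.sum_univ_castSucc]
          rfl

lemma map_pair {x y : ℝ} (hx : 0 ≤ x) (hy : 0 ≤ y) :
    Φ 2 ![x, y] = (Φ 1 fun _ => x) + Φ 1 fun _ => y := by
  rw [hΦ.map_eq_sum (Fin.forall_fin_two.2 ⟨hx, hy⟩), Fin.sum_univ_two]
  rfl

theorem exists_eq_fA (hbdd : IsBoundedUnder (· ≤ ·) (𝓝 1) fun x => Φ 1 fun _ => x) :
    ∃ α : ℝ, ∀ (n : ℕ) (p : Fin n → ℝ), NonnegVec p → Φ n p = fA α p := by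
  have ⟨_, _, _, _, hkron, hone, hzero⟩ := hΦ
  obtain ⟨α, hα⟩ := exists_eq_rpow_of_map_mul hone
    (fun x hx y hy => hkron 1 1 _ _ (fun _ => hx.le) fun _ => hy.le) one_pos hbdd
  refine ⟨α, fun n p hp => (hΦ.map_eq_sum hp).trans (Finset.sum_congr rfl fun i _ => ?_)⟩
  split_ifs with hi
  · rw [hi, hzero]
  · exact hα _ ((hp i).lt_of_ne' hi)

lemma isBoundedUnder_of_pair_le {M : ℝ} (h : ∀ t ∈ Set.Ioo (1 / 2) (3 / 2), Φ 2 ![t, 2 - t] ≤ M) :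
    IsBoundedUnder (· ≤ ·) (𝓝 1) fun x => Φ 1 fun _ => x := by
  have hnhds : Set.Ioo (1 / 2 : ℝ) (3 / 2) ∈ 𝓝 1 := Ioo_mem_nhds (by norm_num) (by norm_num)
  refine isBoundedUnder_of_eventually_le (a := M) ?_
  filter_upwards [hnhds] with t ht
  have ht₀ : 0 ≤ t := by linarith [ht.1]
  have ht₂ : 0 ≤ 2 - t := by linarith [ht.2]
  have hpair := h t ht
  rw [hΦ.map_pair ht₀ ht₂] at hpair
  linarith [hΦ.1 1 (fun _ => 2 - t) fun _ => ht₂]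

theorem exists_eq_fA_of_antitone
    (hanti : ∀ p q : Fin 2 → ℝ, NonnegVec p → NonnegVec q → MajMod p q → Φ 2 p ≤ Φ 2 q) :
    ∃ α : ℝ, 0 ≤ α ∧ α ≤ 1 ∧ ∀ (n : ℕ) (p : Fin n → ℝ), NonnegVec p → Φ n p = fA α p := by
  have hle : ∀ t ∈ Set.Ioo (0 : ℝ) 2, Φ 2 ![t, 2 - t] ≤ Φ 2 ![1, 1] := fun t ht =>
    hanti _ _ (Fin.forall_fin_two.2 ⟨ht.1.le, (sub_pos.2 ht.2).le⟩)
      (Fin.forall_fin_two.2 ⟨zero_le_one, zero_le_one⟩) (majMod_pair_one ht.1 ht.2)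
  obtain ⟨α, hα⟩ := hΦ.exists_eq_fA (hΦ.isBoundedUnder_of_pair_le fun t ht =>
    hle t ⟨by linarith [ht.1], by linarith [ht.2]⟩)
  have hα_mem : ¬(α < 0 ∨ 1 < α) := fun hα' => by
    have hhalf := hle (1 / 2) (by norm_num)
    rw [hα 2 _ (Fin.forall_fin_two.2 (by norm_num)), hα 2 _ (Fin.forall_fin_two.2 (by norm_num)),
      fA_pair_one, show (2 - 1 / 2 : ℝ) = 3 / 2 by norm_num] at hhalf
    exact hhalf.not_gt (two_lt_fA_pair hα')
  rw [not_or, not_lt, not_lt] at hα_mem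
  exact ⟨α, hα_mem.1, hα_mem.2, hα⟩

theorem exists_eq_fA_of_monotone
    (hmono : ∀ p q : Fin 2 → ℝ, NonnegVec p → NonnegVec q → MajMod p q → Φ 2 q ≤ Φ 2 p) :
    ∃ α : ℝ, (α ≤ 0 ∨ 1 ≤ α) ∧ ∀ (n : ℕ) (p : Fin n → ℝ), NonnegVec p → Φ n p = fA α p := by
  have hle : ∀ t ∈ Set.Ioo (1 / 2 : ℝ) (3 / 2), Φ 2 ![t, 2 - t] ≤ Φ 2 ![1 / 2, 3 / 2] :=
    fun t ht => hmono _ _ (Fin.forall_fin_two.2 (by norm_num))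
      (Fin.forall_fin_two.2 ⟨show 0 ≤ t by linarith [ht.1], show 0 ≤ 2 - t by linarith [ht.2]⟩)
      (majMod_half_pair ht.1.le ht.2.le)
  obtain ⟨α, hα⟩ := hΦ.exists_eq_fA (hΦ.isBoundedUnder_of_pair_le hle)
  refine ⟨α, ?_, hα⟩
  by_contra! hα'
  have hone := hle 1 (by norm_num)
  rw [hα 2 _ (Fin.forall_fin_two.2 (by norm_num)), hα 2 _ (Fin.forall_fin_two.2 (by norm_num)),
    show (2 - 1 : ℝ) = 1 by norm_num, fA_pair_one] at hone
  exact hone.not_gt (fA_pair_lt_two hα'.1 hα'.2)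

end PhiBase

theorem classification_monotone_homs_modified_general :
    (∀ Φ : ∀ n : ℕ, (Fin n → ℝ) → ℝ, PhiBase Φ →
      (∀ p q : Fin 2 → ℝ, NonnegVec p → NonnegVec q → MajMod p q → Φ 2 p ≤ Φ 2 q) →
      ∃ α : ℝ, 0 ≤ α ∧ α ≤ 1 ∧
        ∀ (n : ℕ) (p : Fin n → ℝ), NonnegVec p → Φ n p = fA α p) ∧
    (∀ α : ℝ, 0 ≤ α → α ≤ 1 →
      PhiBase (fun _ p => fA α p) ∧
      ∀ (m n : ℕ) (p : Fin m → ℝ) (q : Fin n → ℝ), NonnegVec p → NonnegVec q →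
        MajMod p q → fA α p ≤ fA α q) ∧
    (∀ Φ : ∀ n : ℕ, (Fin n → ℝ) → ℝ, PhiBase Φ →
      (∀ p q : Fin 2 → ℝ, NonnegVec p → NonnegVec q → MajMod p q → Φ 2 q ≤ Φ 2 p) →
      ∃ α : ℝ, (α ≤ 0 ∨ 1 ≤ α) ∧
        ∀ (n : ℕ) (p : Fin n → ℝ), NonnegVec p → Φ n p = fA α p) ∧
    (∀ α : ℝ, (α ≤ 0 ∨ 1 ≤ α) →
      PhiBase (fun _ p => fA α p) ∧
      ∀ (m n : ℕ) (p : Fin m → ℝ) (q : Fin n → ℝ), NonnegVec p → NonnegVec q →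
        MajMod p q → fA α q ≤ fA α p) :=
  ⟨fun _ hΦ hanti => hΦ.exists_eq_fA_of_antitone hanti,
    fun α hα₀ hα₁ => ⟨phiBase_fA α, fun _ _ _ _ hp hq h => h.fA_le_fA_of_concave hp hq hα₀ hα₁⟩,
    fun _ hΦ hmono => hΦ.exists_eq_fA_of_monotone hmono,
    fun α hα => ⟨phiBase_fA α, fun _ _ _ _ hp hq h => h.fA_le_fA_of_convex hp hq hα⟩⟩

/-- **Classification of monotone homomorphisms on the modified majorization
semiring.**  A homomorphism that is antitone for `≽₀,₁` is `f_α` for some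
`α ∈ [0,1]`, and one that is monotone for `≽₀,₁` is `f_α` for some
`α ∈ (−∞,0] ∪ [1,∞)`; conversely all these `f_α` have the listed
properties. -/
theorem classification_monotone_homs_modified :
    (∀ Φ : ∀ n : ℕ, (Fin n → ℝ) → ℝ, PhiBase Φ →
      (∀ (m n : ℕ) (p : Fin m → ℝ) (q : Fin n → ℝ), NonnegVec p → NonnegVec q →
        MajMod p q → Φ m p ≤ Φ n q) →
      ∃ α : ℝ, 0 ≤ α ∧ α ≤ 1 ∧
        ∀ (n : ℕ) (p : Fin n → ℝ), NonnegVec p → Φ n p = fA α p) ∧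
    (∀ α : ℝ, 0 ≤ α → α ≤ 1 →
      PhiBase (fun n p => fA α p) ∧
      ∀ (m n : ℕ) (p : Fin m → ℝ) (q : Fin n → ℝ), NonnegVec p → NonnegVec q →
        MajMod p q → fA α p ≤ fA α q) ∧
    (∀ Φ : ∀ n : ℕ, (Fin n → ℝ) → ℝ, PhiBase Φ →
      (∀ (m n : ℕ) (p : Fin m → ℝ) (q : Fin n → ℝ), NonnegVec p → NonnegVec q →
        MajMod p q → Φ n q ≤ Φ m p) →
      ∃ α : ℝ, (α ≤ 0 ∨ 1 ≤ α) ∧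
        ∀ (n : ℕ) (p : Fin n → ℝ), NonnegVec p → Φ n p = fA α p) ∧
    (∀ α : ℝ, (α ≤ 0 ∨ 1 ≤ α) →
      PhiBase (fun n p => fA α p) ∧
      ∀ (m n : ℕ) (p : Fin m → ℝ) (q : Fin n → ℝ), NonnegVec p → NonnegVec q →
        MajMod p q → fA α q ≤ fA α p) := by
  obtain ⟨hanti, hconcave, hmono, hconvex⟩ := classification_monotone_homs_modified_general
  exact ⟨fun Φ hΦ h => hanti Φ hΦ (h 2 2), hconcave, fun Φ hΦ h => hmono Φ hΦ (h 2 2), hconvex⟩
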